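/- Divided powers of f₀ and f₁ on lattice vectors: for all integers m ≥ 0, with e^{mα} := 1 ⊗ e^{mα}e^{0·α/2} ∈ W₀ and e^{mα}e^{α/2} := 1 ⊗ e^{mα}e^{α/2} ∈ W₁: (a) f₁^{(2m)} e^{mα} = (−1)^m q^{m(2m−1)} e^{−mα} in W₀; (b) f₀^{(2m+1)} e^{−mα} = (−1)^m q^{−(2m+1)(m−2)} e^{(m+1)α} in W₀; (c) f₀^{(2m)} e^{−mα}e^{α/2} = (−1)^m q^{−m(2m−5)} e^{mα}e^{α/2} in W₁; (d) f₁^{(2m+1)} e^{mα}e^{α/2} = (−1)^m q^{m(2m+1)} e^{−(m+1)α}e^{α/2} in W₁. -/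

import Mathlib

/-!
All four identities are instances of one computation with vertex operators. Write
`g^c_k` for `genFamF c k`, so that `∑_k g^c_k z^k = exp (∑_n c_n p_n zⁿ/n)`. Both `f₁` and `f₀`
act on the polynomial part of a vector by an operator (`vertexOp`)
`P ↦ ∑_j g^c_{s+j} · g^d_j(∂) P`, up to a power of `q` for `f₀`, where
`c_n d_n = -(1 + tⁿ)`, with `t = q²` for `f₁` and `t = q⁻²` for `f₀`.

The operator `g^d_j(∂)` sends `P` to the coefficient of `u^j` in the translate
`p_n ↦ p_n + d_n uⁿ` of `P` (`DopF_genFamF`). Under this translation the generating series of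
the `g^c_k` is multiplied by `(1 - uz)(1 - tuz)` (`mk_shiftHom_genFamF`), because both sides solve
the same linear differential equation in `z`. Hence the `r`-fold iterate on `1` is obtained from
the kernel `∏_{i<j} (z_i - z_j)(z_i - t z_j)` by replacing each monomial `z^ν` by
`∏_i g^c_{N - ν_i}` (`vertexIter_eq`). The vectors in the theorem are those for which `N = r - 1`.
As the kernel is homogeneous of degree `r(r-1)` and `g^c` vanishes in negative degrees, only the
monomial `∏ z_i^{r-1}` survives (`coeffMap_of_homogeneous`), so the iterate is a scalar.

The scalar is the coefficient of `∏ z_i^{r-1}` in the kernel. By Lagrange interpolation in each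
variable it is a weighted sum of the values of the kernel on the grid `{1, t, …, t^{r-1}}^r`
(`gridSum_eq_coeff`). The kernel vanishes at every grid point except `(1, t, …, t^{r-1})`
(`eq_id_of_no_descent`), and this one value gives
`(-1)^{r(r-1)/2} ∏_{k=1}^{r} (1 - t^k)/(1 - t)` (`coeff_kerPoly`), which is a signed power of `q`
times `[r]!`.
-/

open MvPolynomial

noncomputable section

/-- The base field `F = ℚ(q)`. -/
abbrev Fq : Type := RatFunc ℚ

/-- The indeterminate `q ∈ ℚ(q)`. -/
def qq : Fq := RatFunc.X

/-- `Λ_F = F[p₁,p₂,…]`, with the variable `X n` (for `n : ℕ+`) the power sum `p_n`. -/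
abbrev LamF : Type := MvPolynomial ℕ+ Fq

/-- The power sum `p_n`. -/
def ppF (n : ℕ+) : LamF := X n

/-- The family `g` with generating function `∑_k g_k t^k = exp (∑_{n≥1} c n · p_n tⁿ/n)`,
characterized by `g 0 = 1` and the recursion obtained by differentiating:
`(k+1) · g (k+1) = ∑_{i=0}^{k} c (i+1) · p_{i+1} · g (k−i)`. -/
def genFamF (c : ℕ → Fq) : ℕ → LamF
  | 0 => 1
  | (k+1) => (((k : Fq) + 1)⁻¹) •
      ∑ i ∈ Finset.range (k+1), c (i+1) • (ppF ⟨i+1, Nat.succ_pos i⟩ * genFamF c (k - i))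
  decreasing_by exact Nat.lt_succ_of_le (Nat.sub_le k i)

/-- The complete homogeneous symmetric function `h_k`. -/
def hhF : ℕ → LamF := genFamF fun _ => 1

/-- The elementary symmetric function `e_k`. -/
def eeF : ℕ → LamF := genFamF fun n => (-1)^(n+1)

/-- `h` indexed by `ℤ` (zero in negative degrees). -/
def hZF (n : ℤ) : LamF := if 0 ≤ n then hhF n.toNat else 0

/-- `e` indexed by `ℤ` (zero in negative degrees). -/
def eZF (n : ℤ) : LamF := if 0 ≤ n then eeF n.toNat else 0

/-- The creation coefficients of `X⁺(z)`:
`exp (∑ ((1+q^{2n})q^{−n}/n)·p_n·zⁿ) = ∑_k HpF k · z^k`. -/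
def HpF : ℕ → LamF := genFamF fun n => (1 + qq ^ (2*n)) * (qq⁻¹) ^ n

/-- `HpF` indexed by `ℤ`. -/
def HZp (n : ℤ) : LamF := if 0 ≤ n then HpF n.toNat else 0

/-- The annihilation avatars for `X⁺(z)`: since
`(1+q^{2n})q^{−n}/n · a_n = q^{−n}·∂/∂p_n`, the coefficient of `z^{−j}` in
`exp (−∑ ((1+q^{2n})q^{−n}/n)·a_n·z^{−n})` is `ApF j` with `p_i ↦ i·∂/∂p_i`
substituted, where `∑_k ApF k t^k = exp (−∑ q^{−n} p_n tⁿ/n)`. -/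
def ApF : ℕ → LamF := genFamF fun n => -((qq⁻¹) ^ n)

/-- The creation coefficients of `X⁻(z)`:
`exp (−∑ ((1+q^{2n})/n)·p_n·zⁿ) = ∑_k HmF k · z^k`. -/
def HmF : ℕ → LamF := genFamF fun n => -(1 + qq ^ (2*n))

/-- `HmF` indexed by `ℤ`. -/
def HZm (n : ℤ) : LamF := if 0 ≤ n then HmF n.toNat else 0

/-- The differential operator `∏_i (i·∂/∂p_i)^(α i)`. -/
def monOpF (α : ℕ+ →₀ ℕ) : Module.End Fq LamF :=
  ((α.support.sort (· ≤ ·)).map fun (i : ℕ+) =>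
    (((i : ℕ) : Fq) • (pderiv i).toLinearMap) ^ (α i)).prod

/-- `f(∂) P`: substitute `p_i ↦ i·∂/∂p_i` in `f` and apply to `P`. -/
def DopF (f : LamF) (P : LamF) : LamF := ∑ α ∈ f.support, f.coeff α • monOpF α P

/-- Bound for the weighted degree of `P` (weight of `p_i` is `i`). -/
def wboundF (P : LamF) : ℕ := P.support.sup fun α => α.sum fun i k => (i : ℕ) * k

/-- The level-one Fock space `W_i = Λ_F ⊗ F[ℤα]e^{iα/2}`, realized as `ℤ →₀ Λ_F`;
`Finsupp.single m P` represents `P·e^{mα}e^{iα/2}`. -/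
abbrev W : Type := ℤ →₀ LamF

/-- The Drinfeld current component `X_n^+` on `W_i` (the parameter `i ∈ {0,1}` enters
through `z^∂ e^{mα}e^{iα/2} = z^{2m+i} e^{mα}e^{iα/2}`): the coefficient of `z^{−n−1}` in
`X⁺(z) = exp(∑((1+q^{2n})q^{−n}/n)a_{−n}zⁿ)·exp(−∑((1+q^{2n})q^{−n}/n)a_n z^{−n})·e^α z^∂`,
i.e. `X_n^+(P·e^{mα}) = ∑_j HpF_{j−n−1−2m−i} · (ApF j)(∂) P · e^{(m+1)α}`
(only the finitely many `j ≤ wboundF P` contribute). -/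
def Xp (i n : ℤ) (w : W) : W :=
  w.sum fun m P => Finsupp.single (m+1)
    (∑ j ∈ Finset.range (wboundF P + 1),
      HZp ((j : ℤ) - n - 1 - 2*m - i) * DopF (ApF j) P)

/-- The Drinfeld current component `X_n^-` on `W_i`: the coefficient of `z^{−n−1}` in
`X⁻(z) = exp(−∑((1+q^{2n})/n)a_{−n}zⁿ)·exp(∑((1+q^{2n})/n)a_n z^{−n})·e^{−α} z^{−∂}`,
i.e. `X_n^-(P·e^{mα}) = ∑_j HmF_{j+2m+i−n−1} · h_j(∂) P · e^{(m−1)α}`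
(here `(1+q^{2n})/n · a_n = ∂/∂p_n`, whose generating family is `h`). -/
def Xm (i n : ℤ) (w : W) : W :=
  w.sum fun m P => Finsupp.single (m-1)
    (∑ j ∈ Finset.range (wboundF P + 1),
      HZm ((j : ℤ) + 2*m + i - n - 1) * DopF (hhF j) P)

/-- The `q`-factorial `[r]! = ∏_{k=1}^r (q^k − q^{−k})/(q − q^{−1})`. -/
def qfact (r : ℕ) : Fq := ∏ k ∈ Finset.range r, (qq ^ (k+1) - (qq⁻¹) ^ (k+1)) / (qq - qq⁻¹)

/-- The divided power `x^{(r)} = x^r / [r]!` of an operator on `W`. -/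
def divpow (f : W → W) (r : ℕ) (w : W) : W := (qfact r)⁻¹ • (f^[r] w)

/-- Schur function of an integer tuple: `s_ρ = det (h_{ρ_i − i + j})`. -/
def schurF {l : ℕ} (ρ : Fin l → ℤ) : LamF :=
  (Matrix.of fun i j : Fin l => hZF (ρ i - (i.1 : ℤ) + (j.1 : ℤ))).det

/-- Dual Schur function of an integer tuple: `s_{ρ'} = det (e_{ρ_i − i + j})`. -/
def schurEF {l : ℕ} (ρ : Fin l → ℤ) : LamF :=
  (Matrix.of fun i j : Fin l => eZF (ρ i - (i.1 : ℤ) + (j.1 : ℤ))).det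

/-- `q^{±∂}`: `q^{ε∂}(P·e^{mα}e^{iα/2}) = q^{ε(2m+i)}·P·e^{mα}e^{iα/2}`. -/
def qd (i ε : ℤ) (w : W) : W := w.sum fun m P => Finsupp.single m (qq ^ (ε * (2*m + i)) • P)

/-- The Chevalley generator `e₁ = X₀⁺`. -/
def che1 (i : ℤ) : W → W := Xp i 0
/-- The Chevalley generator `f₁ = X₀⁻`. -/
def chf1 (i : ℤ) : W → W := Xm i 0
/-- The Chevalley generator `e₀ = X₁⁻ ∘ q^{−∂}`. -/
def che0 (i : ℤ) (w : W) : W := Xm i 1 (qd i (-1) w)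
/-- The Chevalley generator `f₀ = q^∂ ∘ X₋₁⁺`. -/
def chf0 (i : ℤ) (w : W) : W := qd i 1 (Xp i (-1) w)

/-! ### The kernel and its central coefficient -/

/-- The kernel `∏_{i<j} (z_i - z_j)(z_i - t z_j)` in `r` variables. -/
def kerPoly {K : Type*} [Field K] (t : K) (r : ℕ) : MvPolynomial (Fin r) K :=
  ∏ i, ∏ j ∈ Finset.Ioi i, (X i - X j) * (X i - C t * X j)

lemma kerPoly_succ {K : Type*} [Field K] (t : K) (k : ℕ) :
    kerPoly t (k + 1) =
      (∏ j : Fin k, (X 0 - X j.succ) * (X 0 - C t * X j.succ)) * rename Fin.succ (kerPoly t k) := by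
  simp [kerPoly, Fin.prod_univ_succ, Fin.prod_Ioi_succ]

lemma kerPoly_isHomogeneous {K : Type*} [Field K] (t : K) (r : ℕ) :
    (kerPoly t r).IsHomogeneous (r * (r - 1)) := by
  induction r with
  | zero => simpa [kerPoly] using isHomogeneous_one (Fin 0) K
  | succ k ih =>
    rw [kerPoly_succ]
    have h1 : (∏ j : Fin k, (X 0 - X j.succ) * (X 0 - C t * X j.succ) :
        MvPolynomial (Fin (k+1)) K).IsHomogeneous (∑ _j : Fin k, (1 + 1)) := by
      refine IsHomogeneous.prod _ _ _ fun j _ => ?_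
      exact ((isHomogeneous_X _ _).sub (isHomogeneous_X _ _)).mul
        ((isHomogeneous_X _ _).sub (isHomogeneous_C_mul_X _ _))
    have := h1.mul (ih.rename_isHomogeneous (f := Fin.succ))
    convert this using 1
    rcases k with _ | k
    · simp
    · simp; ring

/-- For `r` distinct nodes, the divided difference of `xⁿ` with `n < r`: it is `1` if `n = r - 1` and `0`
otherwise. -/
lemma sum_pow_div {K : Type*} [Field K] {r : ℕ} (v : Fin r → K) (hv : Function.Injective v)
    (n : ℕ) (hn : n < r) :
    ∑ a, v a ^ n / ∏ b ∈ Finset.univ.erase a, (v a - v b) = if n = r - 1 then 1 else 0 := by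
  have h := Lagrange.coeff_eq_sum (s := Finset.univ) (v := v) hv.injOn
    (P := (Polynomial.X ^ n : Polynomial K)) (by simpa using hn)
  simp only [Polynomial.coeff_X_pow, Finset.card_univ, Fintype.card_fin, Polynomial.eval_pow,
    Polynomial.eval_X] at h
  rw [← h]
  simp [eq_comm]

/-- The iterated divided difference of `f` on the grid `{v_0, …, v_{r-1}}^r`: the sum of the values of
`f` at the points `(v_{π 0}, …, v_{π (r-1)})`, weighted by `∏_i ∏_{b ≠ π i} (v_{π i} - v_b)⁻¹`. -/
def gridSum {K : Type*} [Field K] {r : ℕ} (v : Fin r → K) (f : MvPolynomial (Fin r) K) : K :=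
  ∑ π : Fin r → Fin r, eval (fun i => v (π i)) f *
    ∏ i, (∏ b ∈ Finset.univ.erase (π i), (v (π i) - v b))⁻¹

lemma gridSum_monomial {K : Type*} [Field K] {r : ℕ} (v : Fin r → K) (ν : Fin r →₀ ℕ) (c : K) :
    gridSum v (monomial ν c) =
      c * ∏ i, ∑ a, v a ^ ν i / ∏ b ∈ Finset.univ.erase a, (v a - v b) := by
  rw [Finset.prod_univ_sum, Finset.mul_sum, gridSum, Fintype.piFinset_univ]
  refine Finset.sum_congr rfl fun π _ => ?_
  simp [eval_monomial, Finsupp.prod_fintype, div_eq_mul_inv, Finset.prod_mul_distrib, mul_assoc]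

/-- For `f` homogeneous of degree `r(r-1)`, every monomial other than `∏ z_i^{r-1}` has an exponent
below `r - 1`, and so is killed by the divided difference in that variable. -/
lemma gridSum_eq_coeff {K : Type*} [Field K] {r : ℕ} (v : Fin r → K) (hv : Function.Injective v)
    (f : MvPolynomial (Fin r) K) (hf : f.IsHomogeneous (r * (r - 1))) :
    gridSum v f = f.coeff (Finsupp.equivFunOnFinite.symm fun _ => r - 1) := by
  have hadd : gridSum v f = ∑ ν ∈ f.support, gridSum v (monomial ν (f.coeff ν)) := by
    conv_lhs => rw [f.as_sum]
    simp only [gridSum, map_sum, Finset.sum_mul]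
    rw [Finset.sum_comm]
  rw [hadd, Finset.sum_eq_single (Finsupp.equivFunOnFinite.symm fun _ => r - 1)]
  · rw [gridSum_monomial, Finset.prod_eq_one, mul_one]
    intro i _
    have : 0 < r := i.pos
    simpa using sum_pow_div v hv (r - 1) (by omega)
  · intro ν hν hne
    have hdeg : ∑ i, ν i = r * (r - 1) := by
      have := hf (mem_support_iff.mp hν)
      simpa [Finsupp.weight_apply, Finsupp.sum_fintype] using this
    obtain ⟨i, hi⟩ : ∃ i, ν i < r - 1 := by
      by_contra! h
      apply hne
      have h2 := (Finset.sum_eq_sum_iff_of_le (s := Finset.univ) (f := fun _ : Fin r => r - 1)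
        (g := ν) (fun i _ => h i)).mp (by simp [hdeg])
      ext i
      simpa using (h2 i (Finset.mem_univ i)).symm
    rw [gridSum_monomial, Finset.prod_eq_zero (Finset.mem_univ i), mul_zero]
    rw [sum_pow_div v hv _ (by omega), if_neg (by omega)]
  · intro h
    rw [notMem_support_iff.mp h]
    simp [gridSum]

/-- The two hypotheses express that neither factor of the kernel vanishes at the grid point
`(t^{π 0}, t^{π 1}, …)`. The first makes `π` a permutation; the second says that `a` occurs before
`a + 1` for every `a`, so that the inverse of `π` is increasing. -/
lemma eq_id_of_no_descent {r : ℕ} (π : Fin r → Fin r)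
    (h1 : ∀ i j, i < j → π i ≠ π j) (h2 : ∀ i j, i < j → (π i : ℕ) ≠ π j + 1) : π = id := by
  have hinj : Function.Injective π := by
    intro i j hij
    rcases lt_trichotomy i j with h | h | h
    · exact absurd hij (h1 _ _ h)
    · exact h
    · exact absurd hij.symm (h1 _ _ h)
  let σ : Equiv.Perm (Fin r) := Equiv.ofBijective π (Finite.injective_iff_bijective.mp hinj)
  have hσ : ∀ i, π (σ.symm i) = i := fun i => σ.apply_symm_apply i
  have hmono : StrictMono σ.symm := by
    rcases r with _ | r
    · intro a; exact a.elim0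
    · rw [Fin.strictMono_iff_lt_succ]
      intro a
      rcases lt_trichotomy (σ.symm a.castSucc) (σ.symm a.succ) with h | h | h
      · exact h
      · exact absurd (σ.symm.injective h) (Fin.castSucc_lt_succ).ne
      · exact absurd (by rw [hσ, hσ]; simp) (h2 _ _ h)
  have hid : (σ.symm : Fin r → Fin r) = id := by
    rw [← hmono.range_inj strictMono_id]
    simp
  funext i
  have := congrFun hid i
  simp only [id] at this ⊢
  have h3 := hσ i
  rwa [this] at h3

/-- The contribution of the grid point `(1, t, …, t^{r-1})`. The factors with `i = 0` telescope, and
the remaining ones form the same product for `r - 1` after cancelling `t`. -/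
lemma prod_ratio {K : Type*} [Field K] (t : K) (ht0 : t ≠ 0) (ht : ∀ n : ℕ, 0 < n → t ^ n ≠ 1)
    (r : ℕ) :
    ∏ i : Fin r, ∏ j ∈ Finset.Ioi i, (t ^ (i : ℕ) - t ^ ((j : ℕ) + 1)) / (t ^ (j : ℕ) - t ^ (i : ℕ))
      = (-1) ^ (r * (r - 1) / 2) * ∏ k ∈ Finset.range r, (1 - t ^ (k + 1)) / (1 - t) := by
  have hne : ∀ n : ℕ, 1 - t ^ (n + 1) ≠ 0 := fun n h => ht (n + 1) n.succ_pos (sub_eq_zero.mp h).symm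
  have h1 : 1 - t ≠ 0 := by simpa using hne 0
  induction r with
  | zero => simp
  | succ k ih =>
    have htel : ∏ j : Fin k, (1 - t ^ ((j : ℕ) + 1 + 1)) / (t ^ ((j : ℕ) + 1) - 1)
        = (-1) ^ k * ((1 - t ^ (k + 1)) / (1 - t)) := by
      rw [Fin.prod_univ_eq_prod_range (fun j => (1 - t ^ (j + 1 + 1)) / (t ^ (j + 1) - 1))]
      clear ih
      induction k with
      | zero => simp [h1]
      | succ k ih =>
        rw [Finset.prod_range_succ, ih]
        have := hne k
        have h3 : t ^ (k + 1) - 1 ≠ 0 := by rw [← neg_ne_zero, neg_sub]; exact this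
        field_simp
        ring
    rw [Fin.prod_univ_succ, Fin.prod_Ioi_zero]
    have hsh : ∏ i : Fin k, ∏ j ∈ Finset.Ioi i.succ,
        (t ^ ((i.succ : Fin (k+1)) : ℕ) - t ^ ((j : ℕ) + 1)) / (t ^ (j : ℕ) - t ^ ((i.succ : Fin (k+1)) : ℕ))
        = ∏ i : Fin k, ∏ j ∈ Finset.Ioi i,
          (t ^ (i : ℕ) - t ^ ((j : ℕ) + 1)) / (t ^ (j : ℕ) - t ^ (i : ℕ)) := by
      refine Finset.prod_congr rfl fun i _ => ?_
      rw [Fin.prod_Ioi_succ]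
      refine Finset.prod_congr rfl fun j _ => ?_
      rw [← mul_div_mul_left (t ^ (i : ℕ) - t ^ ((j : ℕ) + 1)) _ ht0]
      simp only [Fin.val_succ]
      ring
    rw [hsh, ih, Finset.prod_range_succ]
    simp only [Fin.val_succ, Fin.val_zero, pow_zero]
    rw [htel]
    have : (k + 1) * (k + 1 - 1) / 2 = k + k * (k - 1) / 2 := by
      rcases k with _ | k
      · simp
      · have : (k + 1 + 1) * (k + 1 + 1 - 1) = (k + 1) * (k + 1 - 1) + (k + 1) * 2 := by
          simp; ring
        rw [this, Nat.add_mul_div_right _ _ two_pos]; ring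
    rw [this, pow_add]
    ring

/-- The coefficient of `∏ z_i^{r-1}` in the kernel, read off from its values on the grid
`{1, t, …, t^{r-1}}^r`. -/
lemma coeff_kerPoly {K : Type*} [Field K] (t : K) (ht0 : t ≠ 0) (ht : ∀ n : ℕ, 0 < n → t ^ n ≠ 1)
    (r : ℕ) :
    (kerPoly t r).coeff (Finsupp.equivFunOnFinite.symm fun _ => r - 1)
      = (-1) ^ (r * (r - 1) / 2) * ∏ k ∈ Finset.range r, (1 - t ^ (k + 1)) / (1 - t) := by
  have hinj : Function.Injective fun n : ℕ => t ^ n := by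
    have key : ∀ m n : ℕ, m < n → t ^ m ≠ t ^ n := by
      intro m n hmn h
      apply ht (n - m) (by omega)
      have : t ^ m * t ^ (n - m) = t ^ m * 1 := by rw [← pow_add, mul_one, h]; congr 1; omega
      exact mul_left_cancel₀ (pow_ne_zero _ ht0) this
    intro m n h
    rcases lt_trichotomy m n with h' | h' | h'
    · exact absurd h (key _ _ h')
    · exact h'
    · exact absurd h.symm (key _ _ h')
  have hv : Function.Injective fun a : Fin r => t ^ (a : ℕ) :=
    fun a b h => Fin.ext (hinj h)
  rw [← gridSum_eq_coeff _ hv _ (kerPoly_isHomogeneous t r), ← prod_ratio t ht0 ht, gridSum,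
    Finset.sum_eq_single id]
  · have h := Finset.prod_prod_Ioi_mul_eq_prod_prod_off_diag
      (fun a b : Fin r => t ^ (b : ℕ) - t ^ (a : ℕ))
    simp only [id, Finset.prod_inv_distrib]
    simp only [Finset.compl_singleton] at h
    rw [← h]
    simp only [kerPoly, map_prod, map_mul, map_sub, eval_X, eval_C]
    rw [← div_eq_mul_inv, ← Finset.prod_div_distrib]
    refine Finset.prod_congr rfl fun i _ => ?_
    rw [← Finset.prod_div_distrib]
    refine Finset.prod_congr rfl fun j hj => ?_
    have hij : t ^ (i : ℕ) - t ^ (j : ℕ) ≠ 0 :=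
      sub_ne_zero.mpr fun h => (Finset.mem_Ioi.mp hj).ne (hv h)
    rw [mul_div_mul_left _ _ hij, pow_succ']
  · intro π _ hπ
    rw [mul_eq_zero]
    left
    by_contra hne
    apply hπ
    have hfac : ∀ i j, i < j → (t ^ (π i : ℕ) - t ^ (π j : ℕ)) *
        (t ^ (π i : ℕ) - t * t ^ (π j : ℕ)) ≠ 0 := by
      intro i j hij h0
      apply hne
      simp only [kerPoly, map_prod, map_mul, map_sub, eval_X, eval_C]
      exact Finset.prod_eq_zero (Finset.mem_univ i)
        (Finset.prod_eq_zero (Finset.mem_Ioi.mpr hij) h0)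
    apply eq_id_of_no_descent
    · intro i j hij h
      exact hfac i j hij (by rw [h]; simp)
    · intro i j hij h
      exact hfac i j hij (by rw [h, pow_succ']; simp)
  · simp

/-! ### Translations of `Λ_F` -/

/-- The translation `p_n ↦ p_n + d_n uⁿ`, as an algebra map `Λ_F → Λ_F[u]`. -/
def shiftHom (d : ℕ → Fq) : LamF →ₐ[Fq] Polynomial LamF :=
  aeval fun n : ℕ+ => Polynomial.C (X n) + Polynomial.C (C (d n)) * Polynomial.X ^ (n : ℕ)

@[simp] lemma shiftHom_X (d : ℕ → Fq) (n : ℕ+) : shiftHom d (X n) =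
    Polynomial.C (X n) + Polynomial.C (C (d n)) * Polynomial.X ^ (n : ℕ) := by
  simp [shiftHom]

@[simp] lemma shiftHom_C (d : ℕ → Fq) (a : Fq) : shiftHom d (C a) = Polynomial.C (C a) := by
  simp [shiftHom]

lemma shiftHom_coeff_zero (d : ℕ → Fq) (P : LamF) : (shiftHom d P).coeff 0 = P := by
  induction P using MvPolynomial.induction_on with
  | C a => simp
  | add p q hp hq => simp [hp, hq]
  | mul_X p n hp =>
    have : (n : ℕ) ≠ 0 := n.ne_zero
    simp [Polynomial.mul_coeff_zero, hp, Polynomial.coeff_X_pow, this.symm]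

lemma natDegree_shiftHom_le (d : ℕ → Fq) (P : LamF) :
    (shiftHom d P).natDegree ≤ wboundF P := by
  conv_lhs => rw [P.as_sum, map_sum]
  refine Polynomial.natDegree_sum_le_of_forall_le _ _ fun α hα => ?_
  have h1 : (α.sum fun i k => (i : ℕ) * k) ≤ wboundF P :=
    Finset.le_sup (f := fun α : ℕ+ →₀ ℕ => α.sum fun i k => (i : ℕ) * k) hα
  refine le_trans ?_ h1
  rw [monomial_eq, map_mul, shiftHom_C, Finsupp.prod, map_prod]
  refine (Polynomial.natDegree_C_mul_le _ _).trans ((Polynomial.natDegree_prod_le _ _).trans ?_)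
  refine Finset.sum_le_sum fun i _ => ?_
  change _ ≤ (i : ℕ) * α i
  rw [map_pow, mul_comm]
  refine Polynomial.natDegree_pow_le_of_le _ ?_
  rw [shiftHom_X]
  refine Polynomial.natDegree_add_le_of_degree_le (by simp) ?_
  exact (Polynomial.natDegree_C_mul_X_pow_le _ _)

/-- The chain rule `d/du = ∑_i (i+1) d_{i+1} u^i ∂/∂p_{i+1}` for a translated polynomial, stated
modulo `u^K` so that the sum is finite with a bound independent of `P`. -/
lemma derivative_shiftHom (d : ℕ → Fq) (K : ℕ) (P : LamF) :
    Polynomial.X ^ K ∣ Polynomial.derivative (shiftHom d P) -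
      ∑ i ∈ Finset.range K, Polynomial.X ^ i * (Polynomial.C (C (((i : Fq) + 1) * d (i + 1))) *
        shiftHom d (pderiv i.succPNat P)) := by
  induction P using MvPolynomial.induction_on with
  | C a => simp
  | add p q hp hq =>
    convert dvd_add hp hq using 1
    simp only [map_add, mul_add, Finset.sum_add_distrib]
    ring
  | mul_X p n hp =>
    obtain ⟨k, rfl⟩ : ∃ k : ℕ, n = k.succPNat := ⟨n.natPred, (PNat.succPNat_natPred n).symm⟩
    have hX : Polynomial.X ^ K ∣ Polynomial.derivative (shiftHom d (X k.succPNat)) -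
      ∑ i ∈ Finset.range K, Polynomial.X ^ i * (Polynomial.C (C (((i : Fq) + 1) * d (i + 1))) *
        shiftHom d (pderiv i.succPNat (X k.succPNat : LamF))) := by
      have hd : Polynomial.derivative (shiftHom d (X k.succPNat)) =
          Polynomial.X ^ k * Polynomial.C (C (((k : Fq) + 1) * d (k + 1))) := by
        simp
        ring
      have hs : ∀ i, shiftHom d (pderiv i.succPNat (X k.succPNat : LamF)) =
          if i = k then 1 else 0 := by
        intro i
        rw [pderiv_X]
        by_cases h : i = k
        · subst h; simp
        · have : i.succPNat ≠ k.succPNat := fun h' => h (Nat.succPNat_injective h')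
          simp [h, this.symm]
      simp only [hs, hd, mul_ite, mul_one, mul_zero, Finset.sum_ite_eq']
      split_ifs with h
      · simp
      · rw [Finset.mem_range, not_lt] at h
        rw [sub_zero]
        exact (pow_dvd_pow _ h).mul_right _
    convert dvd_add (hp.mul_right (shiftHom d (X k.succPNat))) (hX.mul_left (shiftHom d p)) using 1
    simp only [map_mul, Derivation.leibniz, smul_eq_mul, map_add, mul_add,
      Finset.sum_add_distrib, sub_mul, mul_sub, Finset.sum_mul, Finset.mul_sum,
      Polynomial.derivative_mul]
    have e1 : ∀ a b c e : Polynomial LamF, a * (b * (c * e)) = c * (a * (b * e)) := by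
      intros; ring
    have e2 : ∀ a b c e : Polynomial LamF, a * (b * c) * e = a * (b * (e * c)) := by
      intros; ring
    simp only [e2]
    simp only [e1 _ _ (shiftHom d p)]
    ring

/-- The same recursion as the one defining `genFamF d`, with `p_i` replaced by `i·∂/∂p_i`. -/
lemma shiftHom_coeff_succ (d : ℕ → Fq) (k : ℕ) (P : LamF) :
    (shiftHom d P).coeff (k + 1) = ((k : Fq) + 1)⁻¹ • ∑ i ∈ Finset.range (k + 1),
      (((i : Fq) + 1) * d (i + 1)) •
        (shiftHom d (pderiv i.succPNat P)).coeff (k - i) := by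
  have h := derivative_shiftHom d (k + 1) P
  rw [Polynomial.X_pow_dvd_iff] at h
  have h := h k (Nat.lt_succ_self k)
  rw [Polynomial.coeff_sub, sub_eq_zero, Polynomial.coeff_derivative,
    Polynomial.finsetSum_coeff] at h
  have hk : ((k : Fq) + 1) ≠ 0 := by exact_mod_cast Nat.succ_ne_zero k
  rw [eq_inv_smul_iff₀ hk]
  have : ((k : Fq) + 1) • (shiftHom d P).coeff (k + 1) =
      (shiftHom d P).coeff (k + 1) * ((k : LamF) + 1) := by
    rw [smul_eq_C_mul]; simp [mul_comm]
  rw [this, h]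
  refine Finset.sum_congr rfl fun i hi => ?_
  rw [Polynomial.coeff_X_pow_mul', if_pos (by simpa [Nat.lt_succ_iff] using hi),
    Polynomial.coeff_C_mul, smul_eq_C_mul]

/-! ### The operators `f(∂)` through the commutative algebra of the `i·∂/∂p_i` -/

section DifferentialOperators

open scoped IsMulCommutative

/-- The operator `i·∂/∂p_i` on `Λ_F`. -/
def dgen (i : ℕ+) : Module.End Fq LamF := ((i : ℕ) : Fq) • (pderiv i).toLinearMap

lemma dgen_apply (i : ℕ+) (P : LamF) : dgen i P = ((i : ℕ) : Fq) • pderiv i P := rfl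

lemma pderiv_comm (i j : ℕ+) (P : LamF) : pderiv i (pderiv j P) = pderiv j (pderiv i P) := by
  have : ⁅pderiv (R := Fq) i, pderiv j⁆ = (0 : Derivation Fq LamF LamF) := by
    apply MvPolynomial.derivation_ext
    intro k
    rw [Derivation.commutator_apply, pderiv_X, pderiv_X, Pi.single_apply, Pi.single_apply]
    split_ifs <;> simp
  have h := congrArg (fun D : Derivation Fq LamF LamF => D P) this
  simpa [Derivation.commutator_apply, sub_eq_zero] using h

lemma dgen_comm (i j : ℕ+) : dgen i * dgen j = dgen j * dgen i := by
  refine LinearMap.ext fun P => ?_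
  simp only [Module.End.mul_apply, dgen_apply, map_smul, pderiv_comm i j, smul_smul]
  rw [mul_comm]

/-- The commutative algebra of operators generated by the `i·∂/∂p_i`. Working in it makes
`f ↦ f(∂)` an algebra map out of the polynomial ring. -/
abbrev DAlg : Subalgebra Fq (Module.End Fq LamF) := Algebra.adjoin Fq (Set.range dgen)


instance : IsMulCommutative DAlg := Algebra.isMulCommutative_adjoin Fq (by
  rintro _ ⟨i, rfl⟩ _ ⟨j, rfl⟩
  exact dgen_comm i j)

/-- The operator `i·∂/∂p_i` as an element of `DAlg`. -/
def dgenA (i : ℕ+) : DAlg := ⟨dgen i, Algebra.subset_adjoin ⟨i, rfl⟩⟩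

lemma monOpF_eq (α : ℕ+ →₀ ℕ) :
    monOpF α = ((α.prod fun i k => dgenA i ^ k : DAlg) : Module.End Fq LamF) := by
  have h : (α.prod fun i k => dgenA i ^ k : DAlg) =
      ((α.support.sort (· ≤ ·)).map fun i => dgenA i ^ α i).prod := by
    rw [Finsupp.prod, ← Finset.prod_map_toList]
    exact List.Perm.prod_eq ((Finset.sort_perm_toList _ _).symm.map _)
  rw [h, monOpF]
  change _ = DAlg.val _
  rw [map_list_prod, List.map_map]
  rfl

/-- `f ↦ f(∂)` is the evaluation homomorphism `p_i ↦ i·∂/∂p_i`. -/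
lemma DopF_eq (f P : LamF) : DopF f P = DAlg.val (aeval dgenA f) P := by
  conv_rhs => rw [f.as_sum, map_sum, map_sum, LinearMap.sum_apply]
  rw [DopF]
  refine Finset.sum_congr rfl fun α _ => ?_
  rw [aeval_monomial, monOpF_eq, map_mul, AlgHom.commutes]
  rfl

lemma genFamF_succ (c : ℕ → Fq) (k : ℕ) : genFamF c (k + 1) = ((k : Fq) + 1)⁻¹ •
    ∑ i ∈ Finset.range (k + 1), c (i + 1) • (X i.succPNat * genFamF c (k - i)) := by
  rw [genFamF]
  rfl

lemma genFamF_zero (c : ℕ → Fq) : genFamF c 0 = 1 := by rw [genFamF]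

/-- A form of Taylor's formula: `exp (∑ d_n uⁿ ∂/∂p_n)` is the translation `p_n ↦ p_n + d_n uⁿ`. -/
lemma DopF_genFamF (d : ℕ → Fq) (k : ℕ) (P : LamF) :
    DopF (genFamF d k) P = (shiftHom d P).coeff k := by
  induction k using Nat.strong_induction_on generalizing P with
  | _ k ih =>
    rcases k with _ | k
    · rw [DopF_eq, genFamF_zero, map_one, shiftHom_coeff_zero]; rfl
    · rw [shiftHom_coeff_succ, DopF_eq, genFamF_succ, map_smul, map_sum]
      rw [map_smul, map_sum, LinearMap.smul_apply, LinearMap.sum_apply]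
      congr 1
      refine Finset.sum_congr rfl fun i hi => ?_
      rw [map_smul, map_mul, aeval_X, mul_comm, map_smul, map_mul, LinearMap.smul_apply,
        Module.End.mul_apply]
      change d (i + 1) • DAlg.val (aeval dgenA (genFamF d (k - i))) (dgen i.succPNat P) = _
      rw [← DopF_eq, ih _ (by omega), dgen_apply, map_smul, Polynomial.coeff_smul, smul_smul,
        mul_comm]
      simp

end DifferentialOperators

/-! ### Translating the generating series -/

/-- Over a `ℚ`-algebra, `dF/dz = A F` determines `F` from its constant coefficient. -/
lemma powerSeries_ode_unique {R : Type*} [CommRing R] [Algebra ℚ R] (A F G : PowerSeries R)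
    (hF : PowerSeries.derivative R F = A * F) (hG : PowerSeries.derivative R G = A * G)
    (h0 : PowerSeries.constantCoeff F = PowerSeries.constantCoeff G) : F = G := by
  ext n
  induction n using Nat.strong_induction_on with
  | _ n ih =>
    rcases n with _ | n
    · simpa using h0
    · have h1 := congrArg (PowerSeries.coeff n) hF
      have h2 := congrArg (PowerSeries.coeff n) hG
      rw [PowerSeries.coeff_derivative, PowerSeries.coeff_mul] at h1 h2
      have h3 : PowerSeries.coeff (n + 1) F * ((n : R) + 1)
          = PowerSeries.coeff (n + 1) G * ((n : R) + 1) := by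
        rw [h1, h2]
        refine Finset.sum_congr rfl fun p hp => ?_
        rw [ih p.2 (by have := Finset.HasAntidiagonal.mem_antidiagonal.mp hp; omega)]
      have hu : IsUnit ((n : R) + 1) := by
        have : ((n : R) + 1) = algebraMap ℚ R ((n : ℚ) + 1) := by simp
        rw [this]
        exact (IsUnit.mk0 _ (by positivity)).map _
      exact hu.mul_right_cancel h3

/-- The family `genFamF c`, extended by zero to negative indices. -/
def genFamZ (c : ℕ → Fq) (n : ℤ) : LamF := if 0 ≤ n then genFamF c n.toNat else 0

lemma genFamZ_neg (c : ℕ → Fq) {n : ℤ} (hn : n < 0) : genFamZ c n = 0 := if_neg (not_le.mpr hn)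

lemma genFamZ_natCast (c : ℕ → Fq) (n : ℕ) : genFamZ c n = genFamF c n := by simp [genFamZ]

lemma genFamF_succ_mul (c : ℕ → Fq) (k : ℕ) : genFamF c (k + 1) * ((k : LamF) + 1) =
    ∑ i ∈ Finset.range (k + 1), C (c (i + 1)) * (X i.succPNat * genFamF c (k - i)) := by
  have hk : ((k : Fq) + 1) ≠ 0 := by exact_mod_cast Nat.succ_ne_zero k
  have : ((k : LamF) + 1) = C ((k : Fq) + 1) := by simp
  rw [this, mul_comm, ← smul_eq_C_mul, genFamF_succ, smul_inv_smul₀ hk]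
  simp only [smul_eq_C_mul]

/-- The image `G(z)` of the generating series of `genFamF c` under a ring map `φ` satisfies
`dG/dz = (∑_i φ(c_{i+1} p_{i+1}) z^i) G`. -/
lemma derivative_mk_genFamF {R : Type*} [CommRing R] (φ : LamF →+* R) (c : ℕ → Fq) :
    PowerSeries.derivative R (PowerSeries.mk fun k => φ (genFamF c k)) =
      PowerSeries.mk (fun i => φ (C (c (i + 1))) * φ (X i.succPNat)) *
        PowerSeries.mk fun k => φ (genFamF c k) := by
  ext k
  rw [PowerSeries.coeff_derivative, PowerSeries.coeff_mul,
    Finset.Nat.sum_antidiagonal_eq_sum_range_succ_mk]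
  simp only [PowerSeries.coeff_mk]
  have := congrArg φ (genFamF_succ_mul c k)
  simp only [map_mul, map_add, map_natCast, map_one, map_sum] at this
  rw [this]
  refine Finset.sum_congr rfl fun i _ => ?_
  ring

lemma geom_series_mul {R : Type*} [CommRing R] (s : R) :
    (1 - PowerSeries.C s * PowerSeries.X) * PowerSeries.mk (fun i => s ^ (i + 1)) =
      PowerSeries.C s := by
  ext k
  rw [sub_mul, one_mul, mul_assoc, map_sub, PowerSeries.coeff_C_mul, PowerSeries.coeff_C]
  rcases k with _ | k
  · simp
  · simp [PowerSeries.coeff_succ_X_mul]; ring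

/-- The translate of `∑_k g_k z^k` is `(1 - uz)(1 - tuz) ∑_k g_k z^k`; this is the identity
`exp (-∑ (1 + tⁿ)(uz)ⁿ/n) = (1 - uz)(1 - tuz)`, obtained by comparing logarithmic derivatives. -/
lemma mk_shiftHom_genFamF (c d : ℕ → Fq) (t : Fq) (hcd : ∀ n, c (n + 1) * d (n + 1) = -(1 + t ^ (n + 1))) :
    (PowerSeries.mk fun k => shiftHom d (genFamF c k)) =
      (1 - PowerSeries.C Polynomial.X * PowerSeries.X) *
        (1 - PowerSeries.C (Polynomial.C (C t) * Polynomial.X) * PowerSeries.X) *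
        PowerSeries.mk fun k => Polynomial.C (genFamF c k) := by
  have h1 := derivative_mk_genFamF (shiftHom d : LamF →+* Polynomial LamF) c
  have h2 := derivative_mk_genFamF (Polynomial.C : LamF →+* Polynomial LamF) c
  have g1 := geom_series_mul (Polynomial.X : Polynomial LamF)
  have g2 := geom_series_mul (Polynomial.C (C t) * Polynomial.X : Polynomial LamF)
  have hA : (PowerSeries.mk fun i => (shiftHom d : LamF →+* Polynomial LamF) (C (c (i + 1))) *
        (shiftHom d : LamF →+* Polynomial LamF) (X i.succPNat)) =
      (PowerSeries.mk fun i => Polynomial.C (C (c (i + 1))) * Polynomial.C (X i.succPNat)) -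
      (PowerSeries.mk fun i => (Polynomial.X : Polynomial LamF) ^ (i + 1)) -
      (PowerSeries.mk fun i => (Polynomial.C (C t) * Polynomial.X : Polynomial LamF) ^ (i + 1)) := by
    ext1 i
    simp only [PowerSeries.coeff_mk, map_sub, RingHom.coe_coe, shiftHom_C, shiftHom_X,
      Nat.succPNat_coe]
    have := congrArg (fun a => (Polynomial.C (C a : LamF))) (hcd i)
    simp only [map_mul, map_neg, map_add, map_one, map_pow] at this
    rw [mul_add, ← mul_assoc, Nat.succ_eq_add_one, this]
    ring
  rw [hA] at h1
  refine powerSeries_ode_unique _ _ _ h1 ?_ ?_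
  · simp only [Derivation.leibniz, h2, smul_eq_mul, map_sub, PowerSeries.derivative_X,
      PowerSeries.derivative_C, Derivation.map_one_eq_zero]
    generalize PowerSeries.mk (fun i => (Polynomial.X : Polynomial LamF) ^ (i + 1)) = B1 at *
    generalize PowerSeries.mk (fun i => (Polynomial.C (C t) * Polynomial.X : Polynomial LamF) ^ (i + 1)) = B2 at *
    generalize (PowerSeries.mk fun k => Polynomial.C (genFamF c k)) = G at *
    generalize PowerSeries.C (Polynomial.C (C t : LamF) * Polynomial.X) = T at *
    generalize PowerSeries.C (Polynomial.X : Polynomial LamF) = U at *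
    linear_combination (1 - T * PowerSeries.X) * G * g1 + (1 - U * PowerSeries.X) * G * g2
  · simp [genFamF_zero]

lemma shiftHom_genFamZ (c d : ℕ → Fq) (t : Fq)
    (hcd : ∀ n, c (n + 1) * d (n + 1) = -(1 + t ^ (n + 1))) (n : ℤ) :
    shiftHom d (genFamZ c n) = Polynomial.C (genFamZ c n)
      - Polynomial.C (C (1 + t)) * Polynomial.X * Polynomial.C (genFamZ c (n - 1))
      + Polynomial.C (C t) * Polynomial.X ^ 2 * Polynomial.C (genFamZ c (n - 2)) := by
  rcases lt_or_ge n 0 with hn | hn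
  · simp [genFamZ_neg c hn, genFamZ_neg c (show n - 1 < 0 by omega),
      genFamZ_neg c (show n - 2 < 0 by omega)]
  obtain ⟨k, rfl⟩ := Int.eq_ofNat_of_zero_le hn
  have h := congrArg (PowerSeries.coeff k) (mk_shiftHom_genFamF c d t hcd)
  have e : ∀ U T G : PowerSeries (Polynomial LamF), (1 - U * PowerSeries.X) * (1 - T * PowerSeries.X) * G
      = G - (U + T) * (PowerSeries.X * G) + (U * T) * (PowerSeries.X * (PowerSeries.X * G)) := by
    intros; ring
  rw [e, ← map_add, ← map_mul] at h
  rw [(PowerSeries.coeff k).map_add, map_sub, PowerSeries.coeff_C_mul,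
    PowerSeries.coeff_C_mul, PowerSeries.coeff_mk, PowerSeries.coeff_mk] at h
  rcases k with _ | _ | k
  · rw [genFamZ_neg c (show ((0 : ℕ) : ℤ) - 1 < 0 by simp),
      genFamZ_neg c (show ((0 : ℕ) : ℤ) - 2 < 0 by simp), genFamZ_natCast, h]
    simp
  · have e1 : ((0 + 1 : ℕ) : ℤ) - 1 = (0 : ℕ) := by simp
    rw [e1, genFamZ_neg c (show ((0 + 1 : ℕ) : ℤ) - 2 < 0 by simp), genFamZ_natCast,
      genFamZ_natCast, h]
    simp only [PowerSeries.coeff_succ_X_mul, PowerSeries.coeff_zero_X_mul, PowerSeries.coeff_mk,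
      map_add, map_one, map_zero]
    ring
  · have e1 : ((k + 1 + 1 : ℕ) : ℤ) - 1 = (k + 1 : ℕ) := by push_cast; ring
    have e2 : ((k + 1 + 1 : ℕ) : ℤ) - 2 = (k : ℕ) := by push_cast; ring
    rw [e1, e2, genFamZ_natCast, genFamZ_natCast, genFamZ_natCast, h]
    simp only [PowerSeries.coeff_succ_X_mul, PowerSeries.coeff_mk, map_add, map_one]
    ring

/-! ### Iterated vertex operators -/

/-- A component of a vertex operator on `Λ_F`: `P ↦ ∑_j g^c_{s+j} · g^d_j(∂) P`, where `g^d_j(∂) P` is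
expressed as the coefficient of `u^j` in `shiftHom d P`. -/
def vertexOp (c d : ℕ → Fq) (s : ℤ) : LamF →ₗ[Fq] LamF :=
  (Polynomial.lsum fun j => LinearMap.mulLeft Fq (genFamZ c (s + j))) ∘ₗ (shiftHom d).toLinearMap

lemma vertexOp_eq_sum (c d : ℕ → Fq) (s : ℤ) (P : LamF) :
    vertexOp c d s P = ∑ j ∈ Finset.range (wboundF P + 1),
      genFamZ c (s + j) * DopF (genFamF d j) P := by
  simp only [DopF_genFamF]
  exact Polynomial.sum_over_range' _ (by simp) _ (Nat.lt_succ_of_le (natDegree_shiftHom_le d P))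

/-- The linear map `z^ν ↦ ∏_i g^c_{N - ν_i}`; on `f` it extracts the coefficient of `∏ z_i^N` in
`f(z) ∏_i (∑_n g^c_n z_i^n)`. -/
def coeffMap (c : ℕ → Fq) (N : ℤ) (k : ℕ) : MvPolynomial (Fin k) Fq →ₗ[Fq] LamF :=
  (basisMonomials (Fin k) Fq).constr Fq fun ν => ∏ i, genFamZ c (N - ν i)

lemma coeffMap_monomial (c : ℕ → Fq) (N : ℤ) (k : ℕ) (ν : Fin k →₀ ℕ) (a : Fq) :
    coeffMap c N k (monomial ν a) = a • ∏ i, genFamZ c (N - ν i) := by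
  have h : monomial ν a = a • (basisMonomials (Fin k) Fq) ν := by simp [smul_monomial]
  rw [h, map_smul, coeffMap, Module.Basis.constr_basis]

/-- The coefficients of `(1 - x)(1 - t x)`. -/
def quadCoeff (t : Fq) : Fin 3 → Fq := ![1, -(1 + t), t]

lemma prod_monomial {σ ι R : Type*} [CommSemiring R] (s : Finset ι) (g : ι → σ →₀ ℕ) (κ : ι → R) :
    ∏ j ∈ s, monomial (g j) (κ j) = monomial (∑ j ∈ s, g j) (∏ j ∈ s, κ j) := by
  classical
  induction s using Finset.induction_on with
  | empty => simp
  | insert a s ha ih => simp [Finset.prod_insert ha, Finset.sum_insert ha, ih, monomial_mul]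

/-- The case of `vertexOp_coeffMap` for a monomial. Both sides expand over the choices
`e : Fin k → Fin 3` of one term in each of the `k` quadratic factors. -/
lemma vertexOp_coeffMap_monomial (c d : ℕ → Fq) (t : Fq)
    (hcd : ∀ n, c (n + 1) * d (n + 1) = -(1 + t ^ (n + 1))) (N : ℤ) (k : ℕ)
    (ν : Fin k →₀ ℕ) (a : Fq) :
    vertexOp c d (N - 2 * k) (coeffMap c N k (monomial ν a)) = coeffMap c N (k + 1)
      ((∏ j : Fin k, (X 0 - X j.succ) * (X 0 - C t * X j.succ)) *
        rename Fin.succ (monomial ν a)) := by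
  have hL : shiftHom d (∏ i, genFamZ c (N - ν i)) = ∑ e : Fin k → Fin 3,
      Polynomial.monomial (∑ i, (e i : ℕ)) (C (∏ i, quadCoeff t (e i)) *
        ∏ i, genFamZ c (N - ν i - (e i : ℕ))) := by
    have h1 : ∀ n : ℤ, shiftHom d (genFamZ c n) = ∑ e : Fin 3,
        Polynomial.C (C (quadCoeff t e)) * Polynomial.X ^ (e : ℕ) *
          Polynomial.C (genFamZ c (n - (e : ℕ))) := by
      intro n
      rw [shiftHom_genFamZ c d t hcd, Fin.sum_univ_three]
      simp [quadCoeff]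
      ring
    simp only [map_prod, h1]
    rw [Finset.prod_univ_sum, Fintype.piFinset_univ]
    refine Finset.sum_congr rfl fun e _ => ?_
    rw [← Polynomial.C_mul_X_pow_eq_monomial]
    simp only [Finset.prod_mul_distrib, Finset.prod_pow_eq_pow_sum, map_mul, map_prod]
    ring
  have hR : (∏ j : Fin k, (X 0 - X j.succ) * (X 0 - C t * X j.succ) :
      MvPolynomial (Fin (k + 1)) Fq) = ∑ e : Fin k → Fin 3,
        monomial (∑ j, (Finsupp.single 0 (2 - (e j : ℕ)) + Finsupp.single j.succ (e j : ℕ)))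
          (∏ j, quadCoeff t (e j)) := by
    have h1 : ∀ j : Fin k, ((X 0 - X j.succ) * (X 0 - C t * X j.succ) :
        MvPolynomial (Fin (k + 1)) Fq) = ∑ e : Fin 3,
          monomial (Finsupp.single 0 (2 - (e : ℕ)) + Finsupp.single j.succ (e : ℕ))
            (quadCoeff t e) := by
      intro j
      have h2 : ∀ (x y : ℕ) (b : Fq), (monomial (Finsupp.single 0 x + Finsupp.single j.succ y) b :
          MvPolynomial (Fin (k + 1)) Fq) = C b * X 0 ^ x * X j.succ ^ y := by
        intro x y b
        rw [X_pow_eq_monomial, X_pow_eq_monomial, C_mul_monomial, monomial_mul, mul_one, mul_one]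
      rw [Fin.sum_univ_three]
      simp only [h2]
      simp [quadCoeff]
      ring
    simp only [h1]
    rw [Finset.prod_univ_sum, Fintype.piFinset_univ]
    exact Finset.sum_congr rfl fun e _ => prod_monomial _ _ _
  rw [hR, rename_monomial, Finset.sum_mul, map_sum, coeffMap_monomial, map_smul, vertexOp,
    LinearMap.comp_apply, AlgHom.toLinearMap_apply, hL, map_sum, Finset.smul_sum]
  refine Finset.sum_congr rfl fun e _ => ?_
  rw [monomial_mul, coeffMap_monomial, Polynomial.lsum_apply, Polynomial.sum_monomial_index _ _ (by simp),
    LinearMap.mulLeft_apply, Fin.prod_univ_succ]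
  have hz : (((∑ j, (Finsupp.single 0 (2 - (e j : ℕ)) + Finsupp.single j.succ (e j : ℕ)) +
      ν.mapDomain Fin.succ : Fin (k + 1) →₀ ℕ) 0 : ℕ) : ℤ) = 2 * k - ((∑ i, (e i : ℕ) : ℕ) : ℤ) := by
    rw [Finsupp.add_apply, Finsupp.mapDomain_of_notMem_range _ _ (by simp), Finsupp.finsetSum_apply]
    have : ∀ j, ((2 - (e j : ℕ) : ℕ) : ℤ) = 2 - (e j : ℕ) := fun j => by
      have := (e j).isLt; omega
    simp [this, Finset.sum_sub_distrib, mul_comm]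
  have hs : ∀ i : Fin k, (∑ j, (Finsupp.single 0 (2 - (e j : ℕ)) + Finsupp.single j.succ (e j : ℕ)) +
      ν.mapDomain Fin.succ : Fin (k + 1) →₀ ℕ) i.succ = e i + ν i := by
    intro i
    rw [Finsupp.add_apply, Finsupp.mapDomain_apply (Fin.succ_injective k), Finsupp.finsetSum_apply]
    simp [Finsupp.single_apply]
  simp only [hs, hz]
  have e1 : N - (2 * k - ((∑ i, (e i : ℕ) : ℕ) : ℤ)) = N - 2 * k + ((∑ i, (e i : ℕ) : ℕ) : ℤ) := by ring
  have e2 : ∀ i, N - ((e i + ν i : ℕ) : ℤ) = N - ν i - (e i : ℕ) := fun i => by push_cast; ring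
  rw [e1]
  simp only [e2, smul_eq_C_mul, map_mul]
  ring

/-- Applying one more vertex operator introduces a new first variable `z_0` and multiplies the kernel
by `∏_j (z_0 - z_j)(z_0 - t z_j)`. -/
lemma vertexOp_coeffMap (c d : ℕ → Fq) (t : Fq)
    (hcd : ∀ n, c (n + 1) * d (n + 1) = -(1 + t ^ (n + 1))) (N : ℤ) (k : ℕ)
    (f : MvPolynomial (Fin k) Fq) :
    vertexOp c d (N - 2 * k) (coeffMap c N k f) = coeffMap c N (k + 1)
      ((∏ j : Fin k, (X 0 - X j.succ) * (X 0 - C t * X j.succ)) * rename Fin.succ f) := by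
  rw [f.as_sum]
  simp only [map_sum, Finset.mul_sum]
  exact Finset.sum_congr rfl fun ν _ => vertexOp_coeffMap_monomial c d t hcd N k ν _

/-- If `N = r - 1`, a monomial of degree `r(r-1)` other than `∏ z_i^{r-1}` has an exponent exceeding
`N`, hence is sent to `0`. -/
lemma coeffMap_of_homogeneous (c : ℕ → Fq) (r : ℕ) (f : MvPolynomial (Fin r) Fq)
    (hf : f.IsHomogeneous (r * (r - 1))) :
    coeffMap c ((r : ℤ) - 1) r f =
      f.coeff (Finsupp.equivFunOnFinite.symm fun _ => r - 1) • (1 : LamF) := by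
  conv_lhs => rw [f.as_sum, map_sum]
  rw [Finset.sum_eq_single (Finsupp.equivFunOnFinite.symm fun _ => r - 1)]
  · rw [coeffMap_monomial, Finset.prod_eq_one]
    intro i _
    have : (r : ℤ) - 1 - ((r - 1 : ℕ) : ℤ) = ((0 : ℕ) : ℤ) := by have := i.pos; omega
    simp only [Finsupp.equivFunOnFinite_symm_apply_apply]
    rw [this, genFamZ_natCast, genFamF_zero]
  · intro ν hν hne
    have hdeg : ∑ i, ν i = r * (r - 1) := by
      have := hf (mem_support_iff.mp hν)
      simpa [Finsupp.weight_apply, Finsupp.sum_fintype] using this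
    obtain ⟨i, hi⟩ : ∃ i, r - 1 < ν i := by
      by_contra! h
      apply hne
      have h2 := (Finset.sum_eq_sum_iff_of_le (s := Finset.univ) (g := fun _ : Fin r => r - 1)
        (f := ν) (fun i _ => h i)).mp (by simp [hdeg])
      ext i
      simpa using (h2 i (Finset.mem_univ i))
    rw [coeffMap_monomial, Finset.prod_eq_zero (Finset.mem_univ i), smul_zero]
    exact genFamZ_neg c (by omega)
  · intro h
    rw [notMem_support_iff.mp h]
    simp

/-- The polynomial obtained from `1` by applying successively the components `vertexOp c d s` with
`s = N, N - 2, N - 4, …` (`k` of them); the step `-2` is the shift of the power of `z` when `e^{±α}`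
acts. -/
def vertexIter (c d : ℕ → Fq) (N : ℤ) : ℕ → LamF
  | 0 => 1
  | k + 1 => vertexOp c d (N - 2 * k) (vertexIter c d N k)

lemma vertexIter_eq (c d : ℕ → Fq) (t : Fq)
    (hcd : ∀ n, c (n + 1) * d (n + 1) = -(1 + t ^ (n + 1))) (N : ℤ) (k : ℕ) :
    vertexIter c d N k = coeffMap c N k (kerPoly t k) := by
  induction k with
  | zero =>
    have : kerPoly t 0 = monomial 0 1 := by simp [kerPoly]
    rw [this, coeffMap_monomial]
    simp [vertexIter]
  | succ k ih => rw [vertexIter, ih, kerPoly_succ, vertexOp_coeffMap c d t hcd]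

lemma vertexIter_top (c d : ℕ → Fq) (t : Fq)
    (hcd : ∀ n, c (n + 1) * d (n + 1) = -(1 + t ^ (n + 1)))
    (ht0 : t ≠ 0) (ht : ∀ n : ℕ, 0 < n → t ^ n ≠ 1) (r : ℕ) :
    vertexIter c d ((r : ℤ) - 1) r = ((-1) ^ (r * (r - 1) / 2) *
      ∏ k ∈ Finset.range r, (1 - t ^ (k + 1)) / (1 - t)) • (1 : LamF) := by
  rw [vertexIter_eq c d t hcd, coeffMap_of_homogeneous _ _ _ (kerPoly_isHomogeneous t r),
    coeff_kerPoly t ht0 ht]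

/-! ### The `q`-factorial -/

lemma qq_ne_zero : qq ≠ 0 := RatFunc.X_ne_zero

lemma qq_pow_ne_one (n : ℕ) (hn : 0 < n) : qq ^ n ≠ 1 := by
  intro h
  have h1 : algebraMap (Polynomial ℚ) (RatFunc ℚ) (Polynomial.X ^ n) =
      algebraMap (Polynomial ℚ) (RatFunc ℚ) 1 := by
    rw [map_pow, RatFunc.algebraMap_X, map_one]; exact h
  have h2 := congrArg Polynomial.natDegree (RatFunc.algebraMap_injective ℚ h1)
  rw [Polynomial.natDegree_X_pow, Polynomial.natDegree_one] at h2
  omega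

lemma qint_ne_zero (k : ℕ) : qq ^ (k + 1) - qq⁻¹ ^ (k + 1) ≠ 0 := by
  have h0 := qq_ne_zero
  intro h
  apply qq_pow_ne_one (2 * (k + 1)) (by omega)
  have : qq ^ (k + 1) * qq⁻¹ ^ (k + 1) = 1 := by rw [← mul_pow, mul_inv_cancel₀ h0, one_pow]
  rw [two_mul, pow_add, ← this]
  rw [sub_eq_zero] at h
  rw [← h]

lemma qfact_ne_zero (r : ℕ) : qfact r ≠ 0 :=
  Finset.prod_ne_zero_iff.mpr fun k _ => div_ne_zero (qint_ne_zero k) (by simpa using qint_ne_zero 0)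

/-- For `t = q^{2ε}` with `ε = ±1`, the `t`-factorial `∏ (1 - t^k)/(1 - t)` is
`q^{ε r(r-1)/2} [r]!`. -/
lemma prod_qint (ε : ℤ) (hε : ε = 1 ∨ ε = -1) (r : ℕ) :
    ∏ k ∈ Finset.range r, (1 - (qq ^ (2 * ε)) ^ (k + 1)) / (1 - qq ^ (2 * ε)) =
      qq ^ (ε * (r * (r - 1) / 2 : ℕ)) * qfact r := by
  have h0 := qq_ne_zero
  have key : ∀ k : ℕ, (1 - (qq ^ (2 * ε)) ^ (k + 1)) / (1 - qq ^ (2 * ε)) =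
      qq ^ (ε * k) * ((qq ^ (k+1) - (qq⁻¹) ^ (k+1)) / (qq - qq⁻¹)) := by
    intro k
    have f : ∀ n : ℕ, 1 - (qq ^ (2 * ε)) ^ n = -ε * qq ^ (ε * n) * (qq ^ n - qq⁻¹ ^ n) := by
      intro n
      have h1 : qq ^ n * qq⁻¹ ^ n = 1 := by rw [← mul_pow, mul_inv_cancel₀ h0, one_pow]
      rcases hε with rfl | rfl
      · simp only [mul_one, one_mul, zpow_natCast, Int.cast_one]
        have : (qq ^ (2 : ℤ)) ^ n = qq ^ n * qq ^ n := by
          rw [← mul_pow, ← sq]; norm_cast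
        rw [this]
        linear_combination (-1 : Fq) * h1
      · have e : (qq ^ (2 * (-1) : ℤ)) ^ n = qq⁻¹ ^ n * qq⁻¹ ^ n := by
          rw [← mul_pow, ← sq, mul_neg_one, zpow_neg, inv_pow]
          norm_cast
          simp only [inv_pow]
        have e' : qq ^ (-1 * (n : ℤ)) = qq⁻¹ ^ n := by
          rw [neg_one_mul, zpow_neg, zpow_natCast, inv_pow]
        rw [e, e']
        push_cast
        linear_combination (-1 : Fq) * h1
    have hq : qq - qq⁻¹ ≠ 0 := by simpa using qint_ne_zero 0
    have hε0 : (ε : Fq) ≠ 0 := by rcases hε with rfl | rfl <;> simp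
    have f1 := f 1
    simp only [pow_one, Nat.cast_one, mul_one] at f1
    rw [f, f1]
    have : qq ^ (ε * ((k + 1 : ℕ) : ℤ)) = qq ^ (ε * k) * qq ^ ε := by
      rw [← zpow_add₀ h0]; congr 1; push_cast; ring
    rw [this]
    have := zpow_ne_zero ε h0
    field_simp
  simp only [key, Finset.prod_mul_distrib]
  rw [qfact]
  congr 1
  clear key
  induction r with
  | zero => simp
  | succ k ih =>
    rw [Finset.prod_range_succ, ih, ← zpow_add₀ h0]
    congr 1
    rw [← Finset.sum_range_id, ← Finset.sum_range_id, Finset.sum_range_succ]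
    push_cast
    ring

/-! ### The operators `f₀` and `f₁` -/

/-- The creation coefficients of `X⁻(z)`: `HmF = genFamF cMinus`. -/
def cMinus (n : ℕ) : Fq := -(1 + qq ^ (2 * n))
/-- The annihilation coefficients of `X⁻(z)`: `hhF = genFamF dMinus`. -/
def dMinus (_ : ℕ) : Fq := 1
/-- The creation coefficients of `X⁺(z)`: `HpF = genFamF cPlus`. -/
def cPlus (n : ℕ) : Fq := (1 + qq ^ (2 * n)) * (qq⁻¹) ^ n
/-- The annihilation coefficients of `X⁺(z)`: `ApF = genFamF dPlus`. -/
def dPlus (n : ℕ) : Fq := -((qq⁻¹) ^ n)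

lemma DopF_zero (f : LamF) : DopF f 0 = 0 := by simp [DopF]

lemma chf1_single (i m : ℤ) (P : LamF) : chf1 i (Finsupp.single m P) =
    Finsupp.single (m - 1) (vertexOp cMinus dMinus (2 * m + i - 1) P) := by
  rw [chf1, Xm, Finsupp.sum_single_index (by simp [DopF_zero]), vertexOp_eq_sum]
  congr 1
  refine Finset.sum_congr rfl fun j _ => ?_
  have : (j : ℤ) + 2 * m + i - 0 - 1 = 2 * m + i - 1 + j := by ring
  rw [this]
  rfl

lemma chf0_single (i m : ℤ) (P : LamF) : chf0 i (Finsupp.single m P) =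
    Finsupp.single (m + 1)
      (qq ^ (2 * (m + 1) + i) • vertexOp cPlus dPlus (-2 * m - i) P) := by
  rw [chf0, Xp, Finsupp.sum_single_index (by simp [DopF_zero]), vertexOp_eq_sum, qd,
    Finsupp.sum_single_index (by simp), one_mul]
  congr 2
  refine Finset.sum_congr rfl fun j _ => ?_
  have : (j : ℤ) - -1 - 1 - 2 * m - i = -2 * m - i + j := by ring
  rw [this]
  rfl

lemma chf1_iterate (i m : ℤ) (k : ℕ) : (chf1 i)^[k] (Finsupp.single m 1) =
    Finsupp.single (m - k) (vertexIter cMinus dMinus (2 * m + i - 1) k) := by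
  induction k with
  | zero => simp [vertexIter]
  | succ k ih =>
    rw [Function.iterate_succ_apply', ih, chf1_single, vertexIter]
    congr 1
    · push_cast; ring
    · congr 2; ring

/-- The exponent of `q` collects the factors `q^{2(m+l)+i}`, `l = 1, …, k`, produced by `q^∂`. -/
lemma chf0_iterate (i m : ℤ) (k : ℕ) : (chf0 i)^[k] (Finsupp.single m 1) =
    qq ^ ((k : ℤ) * (2 * m + i + k + 1)) •
      Finsupp.single (m + k) (vertexIter cPlus dPlus (-2 * m - i) k) := by
  induction k with
  | zero => simp [vertexIter]
  | succ k ih =>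
    rw [Function.iterate_succ_apply', ih, Finsupp.smul_single, chf0_single, vertexIter,
      Finsupp.smul_single, map_smul, smul_smul, ← zpow_add₀ qq_ne_zero]
    congr 1
    · push_cast; ring
    · congr 2
      · push_cast; ring
      · rw [show -2 * (m + (k : ℤ)) - i = -2 * m - i - 2 * k by ring]

lemma qq_zpow_pow_ne_one (ε : ℤ) (hε : ε = 1 ∨ ε = -1) (n : ℕ) (hn : 0 < n) :
    (qq ^ (2 * ε)) ^ n ≠ 1 := by
  have h := qq_pow_ne_one (2 * n) (by omega)
  rcases hε with rfl | rfl
  · rw [← zpow_natCast, ← zpow_mul]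
    exact_mod_cast h
  · rw [mul_neg_one, zpow_neg, inv_pow, Ne, inv_eq_one, ← zpow_natCast, ← zpow_mul]
    exact_mod_cast h

lemma vertexIter_minus (r : ℕ) : vertexIter cMinus dMinus ((r : ℤ) - 1) r =
    ((-1) ^ (r * (r - 1) / 2) * (qq ^ ((r * (r - 1) / 2 : ℕ) : ℤ) * qfact r)) • (1 : LamF) := by
  rw [vertexIter_top cMinus dMinus (qq ^ (2 * 1 : ℤ)) ?_ (zpow_ne_zero _ qq_ne_zero)
    (qq_zpow_pow_ne_one 1 (Or.inl rfl)), prod_qint 1 (Or.inl rfl), one_mul]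
  intro n
  rw [cMinus, dMinus, mul_one, pow_mul]
  norm_cast

lemma vertexIter_plus (r : ℕ) : vertexIter cPlus dPlus ((r : ℤ) - 1) r =
    ((-1) ^ (r * (r - 1) / 2) * (qq ^ (-((r * (r - 1) / 2 : ℕ) : ℤ)) * qfact r)) • (1 : LamF) := by
  rw [vertexIter_top cPlus dPlus (qq ^ (2 * (-1) : ℤ)) ?_ (zpow_ne_zero _ qq_ne_zero)
    (qq_zpow_pow_ne_one (-1) (Or.inr rfl)), prod_qint (-1) (Or.inr rfl), neg_one_mul]
  intro n
  have h1 : qq ^ (n + 1) * qq⁻¹ ^ (n + 1) = 1 := by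
    rw [← mul_pow, mul_inv_cancel₀ qq_ne_zero, one_pow]
  have e : (qq ^ (2 * (-1) : ℤ)) ^ (n + 1) = qq⁻¹ ^ (n + 1) * qq⁻¹ ^ (n + 1) := by
    rw [← mul_pow, ← sq, mul_neg_one, zpow_neg, inv_pow]
    norm_cast
    simp only [inv_pow]
  rw [e, cPlus, dPlus, two_mul (n + 1), pow_add]
  generalize qq⁻¹ ^ (n + 1) = y at *
  generalize qq ^ (n + 1) = x at *
  linear_combination (-(x * y) - 1) * h1

/-- The condition on `m` is that the iterated vertex operator starts at `N = r - 1`. -/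
lemma divpow_chf1 (i m : ℤ) (r : ℕ) (h : 2 * m + i = r) :
    divpow (chf1 i) r (Finsupp.single m 1) = (-1 : Fq) ^ (r * (r - 1) / 2) •
      qq ^ ((r * (r - 1) / 2 : ℕ) : ℤ) • Finsupp.single (m - r) (1 : LamF) := by
  rw [divpow, chf1_iterate, h, vertexIter_minus, ← Finsupp.smul_single, smul_smul, smul_smul]
  congr 1
  have := qfact_ne_zero r
  field_simp

/-- The condition on `m` is that the iterated vertex operator starts at `N = r - 1`; it also makes
the total contribution of `q^∂` equal to `q^{2r}`. -/
lemma divpow_chf0 (i m : ℤ) (r : ℕ) (h : -2 * m - i = (r : ℤ) - 1) :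
    divpow (chf0 i) r (Finsupp.single m 1) = (-1 : Fq) ^ (r * (r - 1) / 2) •
      qq ^ (2 * (r : ℤ) - ((r * (r - 1) / 2 : ℕ) : ℤ)) • Finsupp.single (m + r) (1 : LamF) := by
  rw [divpow, chf0_iterate, h, vertexIter_plus, ← Finsupp.smul_single, smul_smul, smul_smul,
    smul_smul]
  congr 1
  have := qfact_ne_zero r
  have e : 2 * m + i + r + 1 = 2 := by linarith
  rw [e, sub_eq_add_neg, zpow_add₀ qq_ne_zero, mul_comm 2 (r : ℤ)]
  field_simp

lemma choose_even (m : ℕ) : 2 * m * (2 * m - 1) / 2 = m * (2 * m - 1) := by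
  rw [mul_assoc, Nat.mul_div_cancel_left _ two_pos]

lemma choose_odd (m : ℕ) : (2 * m + 1) * (2 * m + 1 - 1) / 2 = m * (2 * m + 1) := by
  rw [Nat.add_sub_cancel, mul_comm, mul_assoc, Nat.mul_div_cancel_left _ two_pos]

lemma cast_choose_even (m : ℕ) : ((m * (2 * m - 1) : ℕ) : ℤ) = m * (2 * m - 1) := by
  rcases m with _ | m
  · simp
  · rw [Nat.cast_mul, Nat.cast_sub (by omega)]; push_cast; ring

lemma sign_even (m : ℕ) : (-1 : Fq) ^ (m * (2 * m - 1)) = (-1) ^ m := by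
  rcases m with _ | m
  · simp
  · rw [mul_comm, pow_mul, Odd.neg_one_pow ⟨m, by omega⟩]

lemma sign_odd (m : ℕ) : (-1 : Fq) ^ (m * (2 * m + 1)) = (-1) ^ m := by
  rw [mul_comm, pow_mul, Odd.neg_one_pow ⟨m, rfl⟩]

/-- divided powers of `f₀` and `f₁` on lattice vectors
(`e^{mα} := 1 ⊗ e^{mα}` realized as `Finsupp.single m 1`): for all `m ≥ 0` (`m : ℕ`):
(a) in `W₀`: `f₁^{(2m)} e^{mα} = (−1)^m q^{m(2m−1)} e^{−mα}`;
(b) in `W₀`: `f₀^{(2m+1)} e^{−mα} = (−1)^m q^{−(2m+1)(m−2)} e^{(m+1)α}`;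
(c) in `W₁`: `f₀^{(2m)} e^{−mα}e^{α/2} = (−1)^m q^{−m(2m−5)} e^{mα}e^{α/2}`;
(d) in `W₁`: `f₁^{(2m+1)} e^{mα}e^{α/2} = (−1)^m q^{m(2m+1)} e^{−(m+1)α}e^{α/2}`. -/
theorem divided_powers_f_on_lattice_vectors (m : ℕ) :
    (divpow (chf1 0) (2*m) (Finsupp.single (m : ℤ) (1 : LamF))
      = ((-1 : Fq)) ^ m • qq ^ ((m : ℤ) * (2*(m : ℤ) - 1)) •
          Finsupp.single (-(m : ℤ)) (1 : LamF)) ∧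
    (divpow (chf0 0) (2*m+1) (Finsupp.single (-(m : ℤ)) (1 : LamF))
      = ((-1 : Fq)) ^ m • qq ^ (-((2*(m : ℤ) + 1) * ((m : ℤ) - 2))) •
          Finsupp.single ((m : ℤ) + 1) (1 : LamF)) ∧
    (divpow (chf0 1) (2*m) (Finsupp.single (-(m : ℤ)) (1 : LamF))
      = ((-1 : Fq)) ^ m • qq ^ (-((m : ℤ) * (2*(m : ℤ) - 5))) •
          Finsupp.single ((m : ℤ)) (1 : LamF)) ∧
    (divpow (chf1 1) (2*m+1) (Finsupp.single ((m : ℤ)) (1 : LamF))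
      = ((-1 : Fq)) ^ m • qq ^ ((m : ℤ) * (2*(m : ℤ) + 1)) •
          Finsupp.single (-((m : ℤ) + 1)) (1 : LamF)) := by
  refine ⟨?_, ?_, ?_, ?_⟩
  · rw [divpow_chf1 0 m (2 * m) (by push_cast; ring), choose_even, sign_even, cast_choose_even]
    congr 3
    push_cast; ring
  · rw [divpow_chf0 0 (-m) (2 * m + 1) (by push_cast; ring), choose_odd, sign_odd]
    congr 3
    · push_cast; ring
    · push_cast; ring
  · rw [divpow_chf0 1 (-m) (2 * m) (by push_cast; ring), choose_even, sign_even, cast_choose_even]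
    congr 3
    · push_cast; ring
    · push_cast; ring
  · rw [divpow_chf1 1 m (2 * m + 1) (by push_cast; ring), choose_odd, sign_odd]
    congr 3
    push_cast; ring
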